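/- Let W be an m×n real matrix with all entries positive and W' an n×m real matrix with all entries positive. Suppose a ∈ ℝ^n and b ∈ ℝ^m have all entries positive and, for some ν > 0, satisfy b = ν·((W·W')·b) and a = ν·((W'·W)·a). Then there exist real numbers α > 0 and β > 0 such that W·a = α·b, W'·b = β·a, and α·β·ν = 1. -/

import Mathlib

/-!
Both `b` and `W a` are eigenvectors of `W W'` for the eigenvalue `ν⁻¹`, and `b` is positive.
Subtract from `W a` the largest multiple `t b` for which the difference stays nonnegative: the
difference is a nonnegative vector in the same eigenspace with a zero entry, and irreducibility of
`W W'` spreads this zero to all entries. Hence `W a = t b`, and applying `W'` gives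
`W' b = (t ν)⁻¹ a`.
-/

open Matrix

section Semiring

variable {ι κ R : Type*} [Fintype ι]

theorem pow_mulVec_eq_pow_smul [DecidableEq ι] [CommSemiring R] {M : Matrix ι ι R} {v : ι → R}
    {r : R} (hv : M *ᵥ v = r • v) (k : ℕ) : (M ^ k) *ᵥ v = r ^ k • v := by
  induction k with
  | zero => simp
  | succ k ih => rw [pow_succ, ← mulVec_mulVec, hv, mulVec_smul, ih, smul_smul, pow_succ']

theorem nonempty_of_eq_smul_mul_mulVec [Fintype κ] [Semiring R] {A : Matrix ι κ R}
    {B : Matrix κ ι R} {v : ι → R} {r : R} (hv : v = r • (A * B) *ᵥ v) {i : ι} (hi : v i ≠ 0) :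
    Nonempty κ := by
  contrapose! hi
  have hAB : A * B = 0 := by ext; simp [mul_apply]
  rw [hv, hAB]
  simp

theorem mul_apply_pos_of_forall_pos {l : Type*} [Nonempty ι] [Semiring R] [PartialOrder R]
    [IsStrictOrderedRing R] {A : Matrix l ι R} {B : Matrix ι κ R} (hA : ∀ i j, 0 < A i j)
    (hB : ∀ i j, 0 < B i j) (i : l) (k : κ) : 0 < (A * B) i k :=
  Finset.sum_pos (fun j _ => mul_pos (hA i j) (hB j k)) Finset.univ_nonempty

end Semiring

section IrreducibleMatrix

variable {ι R : Type*}

theorem isIrreducible_of_forall_pos [Ring R] [LinearOrder R] {M : Matrix ι ι R}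
    (hM : ∀ i j, 0 < M i j) : M.IsIrreducible where
  nonneg i j := (hM i j).le
  connected i j :=
    let := M.toQuiver
    ⟨Quiver.Hom.toPath ⟨hM i j⟩, by simp⟩

theorem eq_zero_of_isIrreducible_of_apply_eq_zero [Fintype ι] [CommRing R] [LinearOrder R]
    [IsStrictOrderedRing R] {M : Matrix ι ι R} (hM : M.IsIrreducible) {v : ι → R} {r : R}
    (hMv : M *ᵥ v = r • v) (hv : 0 ≤ v) {i : ι} (hi : v i = 0) : v = 0 := by
  classical
  funext j
  obtain ⟨k, -, hk⟩ := (isIrreducible_iff_exists_pow_pos hM.nonneg).mp hM i j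
  have hsum : ∑ l, (M ^ k) i l * v l = 0 := by
    simpa [hi, mulVec, dotProduct] using congrFun (pow_mulVec_eq_pow_smul hMv k) i
  have hterm : (M ^ k) i j * v j = 0 :=
    (Finset.sum_eq_zero_iff_of_nonneg fun l _ =>
      mul_nonneg (pow_apply_nonneg hM.nonneg k i l) (hv l)).mp hsum j (Finset.mem_univ j)
  exact (mul_eq_zero.mp hterm).resolve_left hk.ne'

end IrreducibleMatrix

section Field

variable {ι κ K : Type*} [Field K] [LinearOrder K] [IsStrictOrderedRing K]

theorem exists_sub_smul_nonneg_and_apply_eq_zero [Finite ι] [Nonempty ι] {b : ι → K}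
    (hb : ∀ i, 0 < b i) (c : ι → K) : ∃ t : K, 0 ≤ c - t • b ∧ ∃ i, (c - t • b) i = 0 := by
  obtain ⟨i₀, hmin⟩ := Finite.exists_min fun i => c i / b i
  refine ⟨c i₀ / b i₀, fun i => ?_, i₀, ?_⟩
  · simpa using (le_div_iff₀ (hb i)).mp (hmin i)
  · simp [(hb i₀).ne']

variable [Fintype ι]

theorem exists_eq_smul_of_isIrreducible {M : Matrix ι ι K} (hM : M.IsIrreducible)
    {b c : ι → K} {r : K} (hb : ∀ i, 0 < b i) (hMb : M *ᵥ b = r • b) (hMc : M *ᵥ c = r • c) :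
    ∃ t : K, c = t • b := by
  cases isEmpty_or_nonempty ι
  · exact ⟨0, Subsingleton.elim _ _⟩
  obtain ⟨t, hnonneg, i, hi⟩ := exists_sub_smul_nonneg_and_apply_eq_zero hb c
  have heigen : M *ᵥ (c - t • b) = r • (c - t • b) := by
    rw [mulVec_sub, mulVec_smul, hMb, hMc, smul_sub, smul_comm]
  exact ⟨t, sub_eq_zero.mp (eq_zero_of_isIrreducible_of_apply_eq_zero hM heigen hnonneg hi)⟩

variable [Fintype κ]

theorem exists_mulVec_eq_smul_of_isIrreducible_mul {W : Matrix ι κ K} {W' : Matrix κ ι K}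
    (hirr : (W * W').IsIrreducible) {a : κ → K} {b : ι → K} (hb : ∀ i, 0 < b i) {ν : K}
    (hν : ν ≠ 0) (hbeq : b = ν • (W * W') *ᵥ b) (haeq : a = ν • (W' * W) *ᵥ a) :
    ∃ α : K, W *ᵥ a = α • b := by
  have hb_eigen : (W * W') *ᵥ b = ν⁻¹ • b := (eq_inv_smul_iff₀ hν).mpr hbeq.symm
  have hWa_eigen : (W * W') *ᵥ (W *ᵥ a) = ν⁻¹ • W *ᵥ a := by
    rw [eq_inv_smul_iff₀ hν, mulVec_mulVec, Matrix.mul_assoc, ← mulVec_mulVec, ← mulVec_smul,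
      ← haeq]
  exact exists_eq_smul_of_isIrreducible hirr hb hb_eigen hWa_eigen

theorem nebs_linked_general {W : Matrix ι κ K} {W' : Matrix κ ι K}
    (hW : ∀ i j, 0 ≤ W i j) (hirr : (W * W').IsIrreducible)
    {a : κ → K} {b : ι → K} (ha : ∀ j, 0 < a j) (hb : ∀ i, 0 < b i) {ν : K} (hν : 0 < ν)
    (hbeq : b = ν • (W * W') *ᵥ b) (haeq : a = ν • (W' * W) *ᵥ a) :
    ∃ α β : K, 0 < α ∧ 0 < β ∧ W *ᵥ a = α • b ∧ W' *ᵥ b = β • a ∧ α * β * ν = 1 := by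
  rcases isEmpty_or_nonempty ι with hι | ⟨⟨i⟩⟩
  · have hκ : IsEmpty κ := ⟨fun j =>
      not_isEmpty_iff.mpr (nonempty_of_eq_smul_mul_mulVec haeq (ha j).ne') hι⟩
    exact ⟨1, ν⁻¹, one_pos, inv_pos.mpr hν, Subsingleton.elim _ _, Subsingleton.elim _ _,
      by simp [hν.ne']⟩
  obtain ⟨j⟩ : Nonempty κ := nonempty_of_eq_smul_mul_mulVec hbeq (hb i).ne'
  obtain ⟨α, hα⟩ := exists_mulVec_eq_smul_of_isIrreducible_mul hirr hb hν.ne' hbeq haeq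
  have ha_eq : a = (α * ν) • W' *ᵥ b := by
    rw [mul_comm, ← smul_smul, ← mulVec_smul, ← hα, mulVec_mulVec, ← haeq]
  have hα_nonneg : 0 ≤ α := by
    have hWa_nonneg : 0 ≤ (W *ᵥ a) i := dotProduct_nonneg_of_nonneg (hW i) fun j => (ha j).le
    have hαb : 0 ≤ α * b i := by simpa [hα] using hWa_nonneg
    exact nonneg_of_mul_nonneg_left hαb (hb i)
  have hα_ne : α ≠ 0 := by
    rintro rfl
    exact (ha j).ne' (by simp [ha_eq])
  have hα_pos : 0 < α := hα_nonneg.lt_of_ne' hα_ne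
  refine ⟨α, (α * ν)⁻¹, hα_pos, by positivity, hα, ?_, by field_simp⟩
  exact (eq_inv_smul_iff₀ (by positivity)).mpr ha_eq.symm

end Field

/-- key step in the proof of Theorem 3.1 of the paper.
Let `W` and `W'` be positive matrices, and let `a ∈ ℝ^n`, `b ∈ ℝ^m` have all
entries positive and satisfy `b = ν • ((W·W') · b)` and `a = ν • ((W'·W) · a)` for
some `ν > 0`. Then there are `α, β > 0` with `W · a = α • b`, `W' · b = β • a`, and
`α·β·ν = 1`. -/
theorem nebs_linked (m n : ℕ)
    (W : Matrix (Fin m) (Fin n) ℝ) (W' : Matrix (Fin n) (Fin m) ℝ)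
    (hW : ∀ i j, 0 < W i j) (hW' : ∀ i j, 0 < W' i j)
    (a : Fin n → ℝ) (b : Fin m → ℝ)
    (ha : ∀ i, 0 < a i) (hb : ∀ i, 0 < b i)
    (ν : ℝ) (hν : 0 < ν)
    (hbeq : b = ν • (W * W').mulVec b)
    (haeq : a = ν • (W' * W).mulVec a) :
    ∃ α β : ℝ, 0 < α ∧ 0 < β ∧
      W.mulVec a = α • b ∧ W'.mulVec b = β • a ∧ α * β * ν = 1 := by
  have hpos (i k : Fin m) : 0 < (W * W') i k :=
    have := nonempty_of_eq_smul_mul_mulVec hbeq (hb i).ne'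
    mul_apply_pos_of_forall_pos hW hW' i k
  exact nebs_linked_general (fun i j => (hW i j).le) (isIrreducible_of_forall_pos hpos) ha hb hν
    hbeq haeq
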